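/- arXiv:2603.13535 — 2 statements merged into one kernel-verified Lean document; each statement's English description precedes it below -/
import Mathlib

section
/- Let (i,j) ∈ E be an edge of a finite connected simple graph G. With α_⋆ = α_min if c_OR-0(i,j) ≥ 0 and α_⋆ = α_max if c_OR-0(i,j) ≤ 0 (either choice when c_OR-0(i,j) = 0), one has c_OR(i,j) ≥ (1−α_⋆)·c_OR-0(i,j) − Δ_ij(α). -/
namespace Curv

open Finset

noncomputable section

variable {V : Type*} [Fintype V] [DecidableEq V] (G : SimpleGraph V) [DecidableRel G.Adj]

/-- `μ` is a probability distribution on the (finite) vertex set. -/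
def IsProb (μ : V → ℝ) : Prop := (∀ x, 0 ≤ μ x) ∧ ∑ x, μ x = 1

/-- `π` is a coupling of `μ` and `ν`. -/
def IsCoupling (μ ν : V → ℝ) (π : V → V → ℝ) : Prop :=
  (∀ x y, 0 ≤ π x y) ∧ (∀ x, ∑ y, π x y = μ x) ∧ (∀ y, ∑ x, π x y = ν y)

/-- Transport cost of a plan `π` with respect to the shortest-path graph distance. -/
def cost (π : V → V → ℝ) : ℝ := ∑ x, ∑ y, (G.dist x y : ℝ) * π x y

/-- Wasserstein-1 distance between two distributions on the vertex set. -/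
def W1 (μ ν : V → ℝ) : ℝ := sInf {c : ℝ | ∃ π, IsCoupling μ ν π ∧ cost G π = c}

/-- Dirac mass at `u`. -/
def dirac (u : V) : V → ℝ := fun x => if x = u then 1 else 0

/-- Uniform distribution on the neighbours of `u`. -/
def unif (u : V) : V → ℝ := fun x => if G.Adj u x then ((G.degree u : ℝ))⁻¹ else 0

/-- Lazy random-walk measure with laziness parameter `α`. -/
def mGen (α : ℝ) (u : V) : V → ℝ := fun x => α * dirac u x + (1 - α) * unif G u x

/-- Canonical laziness `1/(deg u + 1)`. -/
def alphaL (u : V) : ℝ := ((G.degree u : ℝ) + 1)⁻¹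

/-- The lazy random-walk measure `m_u`. -/
def mLazy (u : V) : V → ℝ := mGen G (alphaL G u) u

/-- Ollivier–Ricci curvature (lazy). -/
def cOR (i j : V) : ℝ := 1 - W1 G (mLazy G i) (mLazy G j)

/-- Non-lazy Ollivier–Ricci curvature. -/
def cOR0 (i j : V) : ℝ := 1 - W1 G (unif G i) (unif G j)

/-- Positive part `[x]₊`. -/
def pos (x : ℝ) : ℝ := max x 0

/-- Triangle count `△(u,v)`. -/
def tri (u v : V) : ℕ := (G.neighborFinset u ∩ G.neighborFinset v).card

/-- Unique neighbours `N(u) \ (N(v) ∪ {v})`. -/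
def uniq (u v : V) : Finset V := G.neighborFinset u \ insert v (G.neighborFinset v)

/-- `ξ_u(u,v)`: unique neighbours of `u` having a neighbour among unique neighbours of `v`. -/
def xiSet (u v : V) : Finset V := (uniq G u v).filter fun k => ∃ w ∈ uniq G v u, G.Adj k w

/-- `Ξ_uv`. -/
def Xi (u v : V) : ℕ := (xiSet G u v).card + (xiSet G v u).card

/-- `□̃(k,u,v) = |N(k) ∩ (N(v)\(N(u)∪{u}))|`. -/
def boxT (k u v : V) : ℕ := (G.neighborFinset k ∩ uniq G v u).card

/-- `ϖ_max(u,v)`. -/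
def varpi (u v : V) : ℕ :=
  max (((G.neighborFinset u).erase v).sup fun k => boxT G k u v)
      (((G.neighborFinset v).erase u).sup fun w => boxT G w v u)

/-- `þ_max(u,v) = ϖ_max(u,v)·max{ρ_u,ρ_v}`. -/
def thMax (u v : V) : ℕ := varpi G u v * max (G.degree u) (G.degree v)

/-- Edgewise 4-cycle coefficient `C₄(u,v)`. -/
def C4 (u v : V) : ℝ := if 0 < Xi G u v then (Xi G u v : ℝ) / (thMax G u v : ℝ) else 0

/-- Graph-wide 4-cycle constant `C₄(G)`. -/
def C4Graph : ℝ := sSup {x : ℝ | ∃ u v, G.Adj u v ∧ x = C4 G u v}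

def rhoMin (i j : V) : ℕ := min (G.degree i) (G.degree j)

def rhoMax (i j : V) : ℕ := max (G.degree i) (G.degree j)

/-- `𝔖(i,j)`. -/
def frakS (i j : V) : ℝ := 2 / (G.degree i : ℝ) + 2 / (G.degree j : ℝ) - 2

/-- `𝔗(i,j)`. -/
def frakT (i j : V) : ℝ := 2 / (rhoMax G i j : ℝ) + 1 / (rhoMin G i j : ℝ)

/-- `𝔎(i,j)`. -/
def frakK (i j : V) : ℝ := 1 - 1 / (rhoMin G i j : ℝ) - 1 / (rhoMax G i j : ℝ)

/-- `Z_min(i,j)`. -/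
def Zmin (i j : V) : ℝ := (tri G i j : ℝ) / (rhoMin G i j : ℝ)

/-- `Z_max(i,j)`. -/
def Zmax (i j : V) : ℝ := (tri G i j : ℝ) / (rhoMax G i j : ℝ)

/-- Balanced Forman curvature. -/
def cBF (i j : V) : ℝ :=
  if rhoMin G i j = 1 then 0
  else frakS G i j + frakT G i j * (tri G i j : ℝ) + C4 G i j

/-- `M` is a matching in the cross-edge bipartite graph `B_ij`. -/
def IsCrossMatching (i j : V) (M : Finset (V × V)) : Prop :=
  (∀ p ∈ M, p.1 ∈ uniq G i j ∧ p.2 ∈ uniq G j i ∧ G.Adj p.1 p.2) ∧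
  (∀ p ∈ M, ∀ q ∈ M, p ≠ q → p.1 ≠ q.1 ∧ p.2 ≠ q.2)

/-- Maximum matching size `𝔪(i,j)` in the cross-edge bipartite graph. -/
def matchNum (i j : V) : ℕ :=
  sSup {n : ℕ | ∃ M : Finset (V × V), IsCrossMatching G i j M ∧ M.card = n}

/-- `𝒮(i,j) = 𝔪(i,j)/ρ_max`. -/
def SS (i j : V) : ℝ := (matchNum G i j : ℝ) / (rhoMax G i j : ℝ)

/-- Lazy per-neighbour weight `w_u = (1-α)/ρ_u`. -/
def wA (α : ℝ) (u : V) : ℝ := (1 - α) / (G.degree u : ℝ)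

/-- Lazy conductance sum `Σ`. -/
def SigmaA (αi αj : ℝ) (i j : V) : ℝ :=
  (G.degree i : ℝ) / (1 - αi) + (G.degree j : ℝ) / (1 - αj)

/-- `Const_α`. -/
def ConstA (αi αj : ℝ) (i j : V) : ℝ :=
  -1 + 2 * (min αi ((1 - αj) / (G.degree j : ℝ)) + min αj ((1 - αi) / (G.degree i : ℝ)))
    + (pos (αi - (1 - αj) / (G.degree j : ℝ)) + pos ((1 - αj) / (G.degree j : ℝ) - αi)
      + pos (αj - (1 - αi) / (G.degree i : ℝ)) + pos ((1 - αi) / (G.degree i : ℝ) - αj))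
    + ((G.degree i : ℝ) + (G.degree j : ℝ) - 2) / SigmaA G αi αj i j

/-- `Slope_α`. -/
def SlopeA (αi αj : ℝ) (i j : V) : ℝ := wA G αi i + wA G αj j - 2 / SigmaA G αi αj i j

/-- `α_⋆`: `α_min` when the non-lazy curvature is nonnegative, `α_max` otherwise. -/
def alphaStar (i j : V) : ℝ :=
  if 0 ≤ cOR0 G i j then min (alphaL G i) (alphaL G j) else max (alphaL G i) (alphaL G j)

/-- `Δ_ij(α) = α_max − α_min` for the canonical laziness. -/
def DeltaL (i j : V) : ℝ := max (alphaL G i) (alphaL G j) - min (alphaL G i) (alphaL G j)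

theorem W1_le (μ ν : V → ℝ) (π : V → V → ℝ) (h : IsCoupling μ ν π) : W1 G μ ν ≤ cost G π := by
  refine csInf_le ⟨0, ?_⟩ ⟨π, h, rfl⟩
  rintro c ⟨π, h, rfl⟩
  exact Finset.sum_nonneg fun x _ => Finset.sum_nonneg fun y _ =>
    mul_nonneg (Nat.cast_nonneg _) (h.1 x y)

theorem W1_symm_le (μ ν : V → ℝ) : W1 G μ ν = W1 G ν μ := by
  have key : ∀ (μ ν : V → ℝ) (c : ℝ), (∃ π, IsCoupling μ ν π ∧ cost G π = c) →
      ∃ π, IsCoupling ν μ π ∧ cost G π = c := by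
    rintro μ ν c ⟨π, h, rfl⟩
    refine ⟨fun x y => π y x, ⟨fun x y => h.1 y x, h.2.2, h.2.1⟩, ?_⟩
    unfold cost
    rw [Finset.sum_comm]
    simp only [SimpleGraph.dist_comm]
  unfold W1
  congr 1
  ext c
  exact ⟨key _ _ c, key _ _ c⟩

theorem exists_near (μ ν : V → ℝ) (hμ : IsProb μ) (hν : IsProb ν) (ε : ℝ) (hε : 0 < ε) :
    ∃ π, IsCoupling μ ν π ∧ cost G π < W1 G μ ν + ε := by
  have hne : {c : ℝ | ∃ π, IsCoupling μ ν π ∧ cost G π = c}.Nonempty := by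
    refine ⟨_, fun x y => μ x * ν y, ⟨fun x y => mul_nonneg (hμ.1 x) (hν.1 y), fun x => ?_,
      fun y => ?_⟩, rfl⟩
    · rw [← Finset.mul_sum, hν.2, mul_one]
    · rw [← Finset.sum_mul, hμ.2, one_mul]
  obtain ⟨c, ⟨π, h, rfl⟩, hc⟩ := exists_lt_of_csInf_lt hne
    (show W1 G μ ν < W1 G μ ν + ε by linarith)
  exact ⟨π, h, hc⟩

theorem W1_key (hG : G.Connected) (i j : V) (hij : G.Adj i j)
    (a b : ℝ) (ha : 0 ≤ a) (hab : a ≤ b) (hb : b ≤ 1)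
    (νi νj : V → ℝ) (hνi : IsProb νi) 
    (π : V → V → ℝ) (hπ : IsCoupling νi νj π) :
    W1 G (fun x => a * dirac i x + (1 - a) * νi x)
          (fun x => b * dirac j x + (1 - b) * νj x) ≤
      a + (1 - b) * cost G π + (b - a) * ∑ x, (G.dist x j : ℝ) * νi x := by
  have hd : ∀ u x : V, 0 ≤ dirac u x := fun u x => by unfold dirac; split_ifs <;> norm_num
  have hs : ∀ u : V, ∑ x, dirac u x = 1 := fun u => by simp [dirac]
  have h1 : (G.dist i j : ℝ) = 1 := by
    rw [SimpleGraph.dist_eq_one_iff_adj.2 hij]; norm_num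
  refine (W1_le G _ _ (fun x y => a * (dirac i x * dirac j y) + (1 - b) * π x y
    + (b - a) * (νi x * dirac j y)) ⟨fun x y => ?_, fun x => ?_, fun y => ?_⟩).trans (le_of_eq ?_)
  · have := mul_nonneg ha (mul_nonneg (hd i x) (hd j y))
    have := mul_nonneg (sub_nonneg.2 hb) (hπ.1 x y)
    have := mul_nonneg (sub_nonneg.2 hab) (mul_nonneg (hνi.1 x) (hd j y))
    linarith
  · simp only [Finset.sum_add_distrib, ← Finset.mul_sum, hs, hπ.2.1]
    ring
  · simp only [Finset.sum_add_distrib, ← Finset.mul_sum, ← Finset.sum_mul, hs, hπ.2.2, hνi.2]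
    ring
  · have e1 : cost G (fun x y => dirac i x * dirac j y) = 1 := by
      simp [cost, dirac, h1]
    have e2 : cost G (fun x y => νi x * dirac j y) = ∑ x, (G.dist x j : ℝ) * νi x := by
      simp [cost, dirac]
    have e3 : cost G (fun x y => a * (dirac i x * dirac j y) + (1 - b) * π x y
        + (b - a) * (νi x * dirac j y)) = a * cost G (fun x y => dirac i x * dirac j y)
        + (1 - b) * cost G π + (b - a) * cost G (fun x y => νi x * dirac j y) := by
      simp only [cost, Finset.mul_sum, ← Finset.sum_add_distrib]
      exact Finset.sum_congr rfl fun x _ => Finset.sum_congr rfl fun y _ => by ring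
    rw [e3, e1, e2]
    ring

theorem D_le_two (hG : G.Connected) (i j : V) (hij : G.Adj i j) (νi : V → ℝ) (hνi : IsProb νi)
    (hsi : ∀ x, ¬ G.Adj i x → νi x = 0) : ∑ x, (G.dist x j : ℝ) * νi x ≤ 2 := by
  calc _ ≤ ∑ x, 2 * νi x := by
        refine Finset.sum_le_sum fun x _ => ?_
        by_cases hx : G.Adj i x
        · refine mul_le_mul_of_nonneg_right ?_ (hνi.1 x)
          have h := hG.dist_triangle (u := x) (v := i) (w := j)
          rw [SimpleGraph.dist_eq_one_iff_adj.2 hij, SimpleGraph.dist_eq_one_iff_adj.2 hx.symm] at h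
          exact_mod_cast h
        · simp [hsi x hx]
    _ = 2 := by rw [← Finset.mul_sum, hνi.2, mul_one]

theorem D_le_cost (hG : G.Connected) (j : V) (νi νj : V → ℝ) (hνi : IsProb νi)
    (hsj : ∀ x, ¬ G.Adj j x → νj x = 0)
    (π : V → V → ℝ) (hπ : IsCoupling νi νj π) :
    ∑ x, (G.dist x j : ℝ) * νi x ≤ cost G π + 1 := by
  have h1 : ∑ x, ∑ y, π x y = 1 := by simp only [hπ.2.1, hνi.2]
  rw [← h1]
  unfold cost
  rw [← Finset.sum_add_distrib]
  refine Finset.sum_le_sum fun x _ => ?_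
  rw [← Finset.sum_add_distrib, ← hπ.2.1 x, Finset.mul_sum]
  refine Finset.sum_le_sum fun y _ => ?_
  by_cases hy : G.Adj j y
  · have h := hG.dist_triangle (u := x) (v := y) (w := j)
    rw [SimpleGraph.dist_eq_one_iff_adj.2 hy.symm] at h
    have h' : (G.dist x j : ℝ) ≤ G.dist x y + 1 := by exact_mod_cast h
    nlinarith [hπ.1 x y]
  · have h0 : π x y = 0 :=
      (Finset.sum_eq_zero_iff_of_nonneg fun x _ => hπ.1 x y).1
        ((hπ.2.2 y).trans (hsj y hy)) x (Finset.mem_univ x)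
    simp [h0]

theorem W1_main (hG : G.Connected) (i j : V) (hij : G.Adj i j)
    (a b : ℝ) (ha : 0 ≤ a) (hab : a ≤ b) (hb : b ≤ 1)
    (νi νj : V → ℝ) (hνi : IsProb νi) (hνj : IsProb νj)
    (hsi : ∀ x, ¬ G.Adj i x → νi x = 0) (hsj : ∀ x, ¬ G.Adj j x → νj x = 0) :
    W1 G (fun x => a * dirac i x + (1 - a) * νi x)
          (fun x => b * dirac j x + (1 - b) * νj x) ≤ b + (1 - a) * W1 G νi νj ∧
    W1 G (fun x => a * dirac i x + (1 - a) * νi x)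
          (fun x => b * dirac j x + (1 - b) * νj x) ≤
            a + (1 - b) * W1 G νi νj + 2 * (b - a) := by
  constructor <;> refine le_of_forall_pos_le_add fun ε hε => ?_ <;>
    obtain ⟨π, hπ, hc⟩ := exists_near G νi νj hνi hνj ε hε <;>
    have hk := W1_key G hG i j hij a b ha hab hb νi νj hνi π hπ
  · have := mul_le_mul_of_nonneg_left (D_le_cost G hG j νi νj hνi hsj π hπ) (sub_nonneg.2 hab)
    have := mul_le_mul_of_nonneg_left hc.le (show 0 ≤ 1 - a by linarith)
    have := mul_nonneg ha hε.le
    linarith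
  · have := mul_le_mul_of_nonneg_left (D_le_two G hG i j hij νi hνi hsi) (sub_nonneg.2 hab)
    have := mul_le_mul_of_nonneg_left hc.le (show 0 ≤ 1 - b by linarith)
    have := mul_nonneg (ha.trans hab) hε.le
    linarith

/-- the piecewise choice `α_⋆` yields
`c_OR ≥ (1−α_⋆)·c_OR-0 − Δ_ij(α)` (either choice allowed when `c_OR-0 = 0`). -/
theorem stmt4 (hG : G.Connected) (i j : V) (hij : G.Adj i j)
    (αi αj : ℝ) (hαi : αi ∈ Set.Icc (0:ℝ) 1) (hαj : αj ∈ Set.Icc (0:ℝ) 1)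
    (νi νj : V → ℝ) (hνi : IsProb νi) (hνj : IsProb νj)
    (hsi : ∀ x, ¬ G.Adj i x → νi x = 0) (hsj : ∀ x, ¬ G.Adj j x → νj x = 0)
    (αstar : ℝ)
    (hstar : (0 ≤ 1 - W1 G νi νj ∧ αstar = min αi αj) ∨
             (1 - W1 G νi νj ≤ 0 ∧ αstar = max αi αj)) :
    1 - W1 G (fun x => αi * dirac i x + (1 - αi) * νi x)
          (fun x => αj * dirac j x + (1 - αj) * νj x)
      ≥ (1 - αstar) * (1 - W1 G νi νj) - (max αi αj - min αi αj) := by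
  rcases le_total αi αj with h | h
  · obtain ⟨h1, h2⟩ := W1_main G hG i j hij αi αj hαi.1 h hαj.2 νi νj hνi hνj hsi hsj
    rw [min_eq_left h, max_eq_right h] at *
    rcases hstar with ⟨_, rfl⟩ | ⟨_, rfl⟩ <;> linarith
  · obtain ⟨h1, h2⟩ := W1_main G hG j i hij.symm αj αi hαj.1 h hαi.2 νj νi hνj hνi hsj hsi
    rw [W1_symm_le G νj νi, W1_symm_le G (fun x => αj * dirac j x + (1 - αj) * νj x)] at h1 h2
    rw [min_eq_right h, max_eq_left h] at *
    rcases hstar with ⟨_, rfl⟩ | ⟨_, rfl⟩ <;> linarith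

end

end Curv
end

section
/- Let (i,j) ∈ E be an edge of a finite connected simple graph G with ρ_min ≥ 2, and let the lazy parameters be α_u = 1/(ρ_u+1). Fix ζ ∈ ℝ and define 𝒵(ζ) = max{0, (ζ − 𝔖(i,j) − C₄(i,j))/𝔗(i,j)}, Z̄_min(ζ) = 𝒵(ζ)/ρ_min, Z̄_max(ζ) = 𝒵(ζ)/ρ_max, the square-matching floor 𝒮̲(ζ) = max{C₄(i,j)/2, (1/2)·[ζ − 𝔖(i,j) − 𝔗(i,j)·(ρ_min−1)]₊}, the non-lazy modulus φ₀(ζ) = −[𝔎(i,j) − Z̄_max(ζ) − 𝒮̲(ζ)]₊ − [𝔎(i,j) − Z̄_min(ζ) − 𝒮̲(ζ)]₊ + Z̄_max(ζ), and φ(ζ) = (1−α_⋆)·φ₀(ζ) − Δ_ij(α), where α_⋆ = min{α_i,α_j} if c_OR-0(i,j) ≥ 0 and α_⋆ = max{α_i,α_j} otherwise, and Δ_ij(α) = max{α_i,α_j} − min{α_i,α_j}. Then c_BF(i,j) ≥ ζ implies c_OR(i,j) ≥ φ(ζ). -/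
namespace Curv

open Finset

noncomputable section

variable {V : Type*} [Fintype V] [DecidableEq V] (G : SimpleGraph V) [DecidableRel G.Adj]

/-- Minimum triangle mass `𝒵(ζ)` forced by a BF level `ζ`. -/
def Zzeta (i j : V) (z : ℝ) : ℝ := max 0 ((z - frakS G i j - C4 G i j) / frakT G i j)

/-- Square-matching floor `𝒮̲(ζ)`. -/
def Sfloor (i j : V) (z : ℝ) : ℝ :=
  max (C4 G i j / 2)
    ((1 / 2) * pos (z - frakS G i j - frakT G i j * ((rhoMin G i j : ℝ) - 1)))

/-- Non-lazy transfer modulus `φ₀(ζ)`. -/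
def phi0 (i j : V) (z : ℝ) : ℝ :=
  -(pos (frakK G i j - Zzeta G i j z / (rhoMax G i j : ℝ) - Sfloor G i j z))
    - pos (frakK G i j - Zzeta G i j z / (rhoMin G i j : ℝ) - Sfloor G i j z)
    + Zzeta G i j z / (rhoMax G i j : ℝ)

/-- Lazy transfer modulus `φ(ζ)`. -/
def phiBFOR (i j : V) (z : ℝ) : ℝ := (1 - alphaStar G i j) * phi0 G i j z - DeltaL G i j

set_option linter.unusedSectionVars false

/-- Transport plan of cost at most `c`. -/
def TP (μ ν : V → ℝ) (c : ℝ) : Prop := ∃ π, IsCoupling μ ν π ∧ cost G π ≤ c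

theorem TP.w1 {μ ν : V → ℝ} {c : ℝ} (h : TP G μ ν c) : W1 G μ ν ≤ c := by
  obtain ⟨π, h1, h2⟩ := h
  refine le_trans (csInf_le ⟨0, ?_⟩ ⟨π, h1, rfl⟩) h2
  rintro c ⟨π, h, rfl⟩
  exact Finset.sum_nonneg fun x _ => Finset.sum_nonneg fun y _ =>
    mul_nonneg (Nat.cast_nonneg _) (h.1 x y)

theorem TP.mono {μ ν : V → ℝ} {c d : ℝ} (h : TP G μ ν c) (hc : c ≤ d) : TP G μ ν d := by
  obtain ⟨π, h1, h2⟩ := h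
  exact ⟨π, h1, h2.trans hc⟩

theorem TP.congr {μ ν μ' ν' : V → ℝ} {c d : ℝ} (h : TP G μ ν c) (h1 : ∀ x, μ' x = μ x)
    (h2 : ∀ x, ν' x = ν x) (hc : c ≤ d) : TP G μ' ν' d := by
  obtain rfl : μ' = μ := funext h1
  obtain rfl : ν' = ν := funext h2
  exact h.mono G hc

theorem TP.symm {μ ν : V → ℝ} {c : ℝ} (h : TP G μ ν c) : TP G ν μ c := by
  obtain ⟨π, ⟨h0, h1, h2⟩, h3⟩ := h
  refine ⟨fun x y => π y x, ⟨fun x y => h0 y x, h2, h1⟩, ?_⟩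
  refine le_trans (le_of_eq ?_) h3
  unfold cost
  rw [Finset.sum_comm]
  simp only [G.dist_comm]

theorem TP.add {μ ν μ' ν' : V → ℝ} {c d : ℝ} (h : TP G μ ν c) (h' : TP G μ' ν' d) :
    TP G (fun x => μ x + μ' x) (fun x => ν x + ν' x) (c + d) := by
  obtain ⟨π, ⟨h0, h1, h2⟩, h3⟩ := h
  obtain ⟨π', ⟨h0', h1', h2'⟩, h3'⟩ := h'
  refine ⟨fun x y => π x y + π' x y, ⟨fun x y => add_nonneg (h0 x y) (h0' x y), ?_, ?_⟩, ?_⟩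
  · intro x; rw [Finset.sum_add_distrib, h1, h1']
  · intro x; rw [Finset.sum_add_distrib, h2, h2']
  · refine le_trans (le_of_eq ?_) (add_le_add h3 h3')
    simp only [cost, mul_add, Finset.sum_add_distrib]

theorem TP.smul {μ ν : V → ℝ} {c : ℝ} (h : TP G μ ν c) (t : ℝ) (ht : 0 ≤ t) :
    TP G (fun x => t * μ x) (fun x => t * ν x) (t * c) := by
  obtain ⟨π, ⟨h0, h1, h2⟩, h3⟩ := h
  refine ⟨fun x y => t * π x y, ⟨fun x y => mul_nonneg ht (h0 x y), ?_, ?_⟩, ?_⟩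
  · intro x; rw [← Finset.mul_sum, h1]
  · intro x; rw [← Finset.mul_sum, h2]
  · refine le_trans (le_of_eq ?_) (mul_le_mul_of_nonneg_left h3 ht)
    simp only [cost, Finset.mul_sum]
    exact Finset.sum_congr rfl fun x _ => Finset.sum_congr rfl fun y _ => by ring

theorem TP.diag (f : V → ℝ) (hf : ∀ x, 0 ≤ f x) : TP G f f 0 := by
  refine ⟨fun x y => if x = y then f x else 0, ⟨fun x y => ?_, fun x => ?_, fun x => ?_⟩, ?_⟩
  · dsimp only; split_ifs; exacts [hf x, le_rfl]
  · simp
  · simp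
  · apply le_of_eq
    unfold cost
    refine Finset.sum_eq_zero fun x _ => Finset.sum_eq_zero fun y _ => ?_
    by_cases h : x = y
    · subst h; simp
    · simp [h]

theorem TP.prod (f g : V → ℝ) (hf : ∀ x, 0 ≤ f x) (hg : ∀ x, 0 ≤ g x) (t : ℝ) (ht : 0 ≤ t)
    (htf : t ≤ ∑ x, f x) (htg : t ≤ ∑ x, g x) (d : ℕ)
    (hd : ∀ x y, f x ≠ 0 → g y ≠ 0 → G.dist x y ≤ d) :
    TP G (fun x => t * (f x / ∑ x, f x)) (fun x => t * (g x / ∑ x, g x)) (d * t) := by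
  set F := ∑ x, f x with hF
  set H := ∑ x, g x with hH
  rcases ht.eq_or_lt with rfl | ht'
  · simpa using TP.diag G (fun _ => 0) (fun _ => le_rfl)
  have hF0 : 0 < F := ht'.trans_le htf
  have hH0 : 0 < H := ht'.trans_le htg
  have e1 : ∑ x, f x / F = 1 := by rw [← Finset.sum_div, ← hF, div_self hF0.ne']
  have e2 : ∑ x, g x / H = 1 := by rw [← Finset.sum_div, ← hH, div_self hH0.ne']
  have hn : ∀ x y, 0 ≤ t * (f x / F) * (g y / H) := fun x y =>
    mul_nonneg (mul_nonneg ht (div_nonneg (hf x) hF0.le)) (div_nonneg (hg y) hH0.le)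
  refine ⟨fun x y => t * (f x / F) * (g y / H), ⟨hn, fun x => ?_, fun y => ?_⟩, ?_⟩
  · rw [← Finset.mul_sum, e2, mul_one]
  · rw [← Finset.sum_mul, ← Finset.mul_sum, e1, mul_one]
  · have : (d * t : ℝ) = ∑ x, ∑ y, (d : ℝ) * (t * (f x / F) * (g y / H)) := by
      simp only [← Finset.mul_sum, e2, mul_one]
      rw [e1, mul_one]
    rw [this]
    refine Finset.sum_le_sum fun x _ => Finset.sum_le_sum fun y _ => ?_
    by_cases h1 : f x = 0
    · simp [h1]
    by_cases h2 : g y = 0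
    · simp [h2]
    exact mul_le_mul_of_nonneg_right (by exact_mod_cast hd x y h1 h2) (hn x y)

theorem hat_eq (f : V → ℝ) (hf : ∀ x, 0 ≤ f x) (x : V) : (∑ x, f x) * (f x / ∑ x, f x) = f x := by
  by_cases h : ∑ x, f x = 0
  · have := (Finset.sum_eq_zero_iff_of_nonneg (fun x _ => hf x)).1 h x (Finset.mem_univ _)
    rw [this]; simp
  · field_simp

theorem TP.block (f1 f2 g1 g2 g3 : V → ℝ) (hf1 : ∀ x, 0 ≤ f1 x) (hf2 : ∀ x, 0 ≤ f2 x)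
    (hg1 : ∀ x, 0 ≤ g1 x) (hg2 : ∀ x, 0 ≤ g2 x) (hg3 : ∀ x, 0 ≤ g3 x)
    (a1 a2 a3 b1 b2 b3 : ℝ) (ha1 : 0 ≤ a1) (ha2 : 0 ≤ a2) (ha3 : 0 ≤ a3)
    (hb1 : 0 ≤ b1) (hb2 : 0 ≤ b2) (hb3 : 0 ≤ b3)
    (r1 : ∑ x, f1 x = a1 + a2 + a3) (r2 : ∑ x, f2 x = b1 + b2 + b3)
    (s1 : ∑ x, g1 x = a1 + b1) (s2 : ∑ x, g2 x = a2 + b2) (s3 : ∑ x, g3 x = a3 + b3)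
    (d1 : ∀ x y, f1 x ≠ 0 → g1 y ≠ 0 → G.dist x y ≤ 1)
    (d2 : ∀ x y, f1 x ≠ 0 → g2 y ≠ 0 → G.dist x y ≤ 1)
    (d3 : ∀ x y, f1 x ≠ 0 → g3 y ≠ 0 → G.dist x y ≤ 1)
    (e1 : ∀ x y, f2 x ≠ 0 → g1 y ≠ 0 → G.dist x y ≤ 1)
    (e2 : ∀ x y, f2 x ≠ 0 → g2 y ≠ 0 → G.dist x y ≤ 2)
    (e3 : ∀ x y, f2 x ≠ 0 → g3 y ≠ 0 → G.dist x y ≤ 3) :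
    TP G (fun x => f1 x + f2 x) (fun x => g1 x + g2 x + g3 x)
      (a1 + a2 + a3 + b1 + 2 * b2 + 3 * b3) := by
  have p1 := TP.prod G f1 g1 hf1 hg1 a1 ha1 (by linarith) (by linarith) 1 d1
  have p2 := TP.prod G f1 g2 hf1 hg2 a2 ha2 (by linarith) (by linarith) 1 d2
  have p3 := TP.prod G f1 g3 hf1 hg3 a3 ha3 (by linarith) (by linarith) 1 d3
  have q1 := TP.prod G f2 g1 hf2 hg1 b1 hb1 (by linarith) (by linarith) 1 e1
  have q2 := TP.prod G f2 g2 hf2 hg2 b2 hb2 (by linarith) (by linarith) 2 e2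
  have q3 := TP.prod G f2 g3 hf2 hg3 b3 hb3 (by linarith) (by linarith) 3 e3
  refine ((((((p1.add G p2).add G p3).add G q1).add G q2).add G q3)).congr G ?_ ?_ ?_
  · intro x
    have h1 := hat_eq f1 hf1 x
    have h2 := hat_eq f2 hf2 x
    generalize f1 x / ∑ x, f1 x = u at *
    generalize f2 x / ∑ x, f2 x = v at *
    rw [← h1, ← h2, r1, r2]; ring
  · intro x
    have h1 := hat_eq g1 hg1 x
    have h2 := hat_eq g2 hg2 x
    have h3 := hat_eq g3 hg3 x
    generalize g1 x / ∑ x, g1 x = u at *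
    generalize g2 x / ∑ x, g2 x = v at *
    generalize g3 x / ∑ x, g3 x = w at *
    rw [← h1, ← h2, ← h3, s1, s2, s3]; ring
  · push_cast; linarith

/-- Optimised block transport. -/
theorem TP.block' (f1 f2 g1 g2 g3 : V → ℝ) (hf1 : ∀ x, 0 ≤ f1 x) (hf2 : ∀ x, 0 ≤ f2 x)
    (hg1 : ∀ x, 0 ≤ g1 x) (hg2 : ∀ x, 0 ≤ g2 x) (hg3 : ∀ x, 0 ≤ g3 x)
    (A U B C R : ℝ)
    (r1 : ∑ x, f1 x = A) (r2 : ∑ x, f2 x = U)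
    (s1 : ∑ x, g1 x = B) (s2 : ∑ x, g2 x = C) (s3 : ∑ x, g3 x = R)
    (hbal : A + U = B + C + R)
    (d1 : ∀ x y, f1 x ≠ 0 → g1 y ≠ 0 → G.dist x y ≤ 1)
    (d2 : ∀ x y, f1 x ≠ 0 → g2 y ≠ 0 → G.dist x y ≤ 1)
    (d3 : ∀ x y, f1 x ≠ 0 → g3 y ≠ 0 → G.dist x y ≤ 1)
    (e1 : ∀ x y, f2 x ≠ 0 → g1 y ≠ 0 → G.dist x y ≤ 1)
    (e2 : ∀ x y, f2 x ≠ 0 → g2 y ≠ 0 → G.dist x y ≤ 2)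
    (e3 : ∀ x y, f2 x ≠ 0 → g3 y ≠ 0 → G.dist x y ≤ 3) :
    TP G (fun x => f1 x + f2 x) (fun x => g1 x + g2 x + g3 x)
      (A + U + pos (U - B) + pos (R - A)) := by
  have hA : 0 ≤ A := r1 ▸ Finset.sum_nonneg fun x _ => hf1 x
  have hU : 0 ≤ U := r2 ▸ Finset.sum_nonneg fun x _ => hf2 x
  have hB : 0 ≤ B := s1 ▸ Finset.sum_nonneg fun x _ => hg1 x
  have hC : 0 ≤ C := s2 ▸ Finset.sum_nonneg fun x _ => hg2 x
  have hR : 0 ≤ R := s3 ▸ Finset.sum_nonneg fun x _ => hg3 x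
  have k1 : U - B ≤ pos (U - B) := le_max_left _ _
  have k2 : R - A ≤ pos (R - A) := le_max_left _ _
  have k3 : 0 ≤ pos (U - B) := le_max_right _ _
  have k4 : 0 ≤ pos (R - A) := le_max_right _ _
  by_cases h1 : A ≤ R
  · refine (TP.block G f1 f2 g1 g2 g3 hf1 hf2 hg1 hg2 hg3 0 0 A B C (R - A) ?_ ?_ ?_ ?_ ?_ ?_
      ?_ ?_ ?_ ?_ ?_ d1 d2 d3 e1 e2 e3).mono G ?_ <;> linarith
  by_cases h2 : B ≤ U
  · refine (TP.block G f1 f2 g1 g2 g3 hf1 hf2 hg1 hg2 hg3 0 (A - R) R B (U - B) 0 ?_ ?_ ?_ ?_ ?_ ?_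
      ?_ ?_ ?_ ?_ ?_ d1 d2 d3 e1 e2 e3).mono G ?_ <;> linarith
  · refine (TP.block G f1 f2 g1 g2 g3 hf1 hf2 hg1 hg2 hg3 (B - U) C R U 0 0 ?_ ?_ ?_ ?_ ?_ ?_
      ?_ ?_ ?_ ?_ ?_ d1 d2 d3 e1 e2 e3).mono G ?_ <;> linarith

theorem TP.toDirac (hG : G.Connected) {μ : V → ℝ} {j : V} {c : ℝ} (h : TP G μ (unif G j) c)
    (hs : ∑ x, μ x = 1) (hμ : ∀ x, 0 ≤ μ x) : TP G μ (dirac j) (c + 1) := by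
  obtain ⟨π, ⟨h0, h1, h2⟩, h3⟩ := h
  refine ⟨fun x y => μ x * dirac j y, ⟨fun x y => mul_nonneg (hμ x) ?_, fun x => ?_, fun y => ?_⟩, ?_⟩
  · unfold dirac; split_ifs <;> norm_num
  · simp [dirac]
  · rw [← Finset.sum_mul, hs, one_mul]
  · have e : ∑ x, ∑ y, π x y = 1 := by simp only [h1, hs]
    have : cost G π + 1 = ∑ x, ∑ y, ((G.dist x y : ℝ) + 1) * π x y := by
      simp only [cost, add_mul, one_mul, Finset.sum_add_distrib, e]
    refine le_trans ?_ (add_le_add_left h3 1)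
    rw [this]
    unfold cost
    refine Finset.sum_le_sum fun x _ => ?_
    have : ∑ y, (G.dist x y : ℝ) * (μ x * dirac j y) = ∑ y, (G.dist x j : ℝ) * π x y := by
      rw [← Finset.mul_sum, h1]
      simp [dirac]
    rw [this]
    refine Finset.sum_le_sum fun y _ => ?_
    by_cases hy : G.Adj j y
    · refine mul_le_mul_of_nonneg_right ?_ (h0 x y)
      have h4 := hG.dist_triangle (u := x) (v := y) (w := j)
      rw [(SimpleGraph.dist_eq_one_iff_adj).2 hy.symm] at h4
      exact_mod_cast h4
    · have h5 : ∑ x, π x y = 0 := by rw [h2]; simp [unif, hy]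
      have := (Finset.sum_eq_zero_iff_of_nonneg (fun x _ => h0 x y)).1 h5 x (Finset.mem_univ _)
      simp [this]

theorem dirac_nonneg (u x : V) : 0 ≤ dirac u x := by unfold dirac; split_ifs <;> norm_num

theorem sum_dirac (u : V) : ∑ x, dirac u x = 1 := by simp [dirac]

theorem unif_nonneg (u x : V) : 0 ≤ unif G u x := by unfold unif; split_ifs <;> positivity

theorem sum_unif (u : V) (h : 0 < G.degree u) : ∑ x, unif G u x = 1 := by
  unfold unif
  rw [← Finset.sum_filter, Finset.sum_const, ← SimpleGraph.neighborFinset_eq_filter,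
    SimpleGraph.card_neighborFinset_eq_degree, nsmul_eq_mul]
  field_simp

theorem dist_le_two (hG : G.Connected) {x u y : V} (h1 : G.Adj u x) (h2 : G.Adj u y) :
    G.dist x y ≤ 2 := by
  have h4 := hG.dist_triangle (u := x) (v := u) (w := y)
  rw [(SimpleGraph.dist_eq_one_iff_adj).2 h1.symm, (SimpleGraph.dist_eq_one_iff_adj).2 h2] at h4
  exact h4

/-- Passing to lazy measures. -/
theorem lazy_aux (hG : G.Connected) (i j : V) (hij : G.Adj i j) (a b c : ℝ) (ha : 0 ≤ a)
    (hab : a ≤ b) (hb : b ≤ 1) (hi : 0 < G.degree i)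
    (h : TP G (unif G i) (unif G j) c) :
    TP G (mGen G a i) (mGen G b j) (a + (1 - a) * c + (b - a)) ∧
    TP G (mGen G a i) (mGen G b j) (b + (1 - b) * c + (b - a)) := by
  have p1 : TP G (dirac i) (dirac j) 1 := by
    refine (TP.prod G (dirac i) (dirac j) (dirac_nonneg _) (dirac_nonneg _) 1 zero_le_one
      (sum_dirac _).ge (sum_dirac _).ge 1 ?_).congr G ?_ ?_ ?_
    · intro x y hx hy
      have hx : x = i := by by_contra hh; simp [dirac, hh] at hx
      have hy : y = j := by by_contra hh; simp [dirac, hh] at hy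
      subst hx hy
      exact ((SimpleGraph.dist_eq_one_iff_adj).2 hij).le
    · intro x; rw [sum_dirac]; simp
    · intro x; rw [sum_dirac]; simp
    · simp
  have p2 : TP G (unif G i) (dirac j) 2 := by
    refine (TP.prod G (unif G i) (dirac j) (unif_nonneg G _) (dirac_nonneg _) 1 zero_le_one
      (sum_unif G _ hi).ge (sum_dirac _).ge 2 ?_).congr G ?_ ?_ ?_
    · intro x y hx hy
      have hx : G.Adj i x := by by_contra hh; simp [unif, hh] at hx
      have hy : y = j := by by_contra hh; simp [dirac, hh] at hy
      subst hy
      exact dist_le_two G hG hx hij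
    · intro x; rw [sum_unif G _ hi]; simp
    · intro x; rw [sum_dirac]; simp
    · simp
  have p3 := h.toDirac G hG (sum_unif G _ hi) (unif_nonneg G _)
  have q1 := p1.smul G a ha
  have q2 := p2.smul G (b - a) (by linarith)
  have q3 := p3.smul G (b - a) (by linarith)
  have q4 := h.smul G (1 - b) (by linarith)
  constructor
  · refine ((q1.add G q3).add G q4).congr G ?_ ?_ ?_
    · intro x; simp only [mGen]; ring
    · intro x; simp only [mGen]; ring
    · linarith
  · refine ((q1.add G q2).add G q4).congr G ?_ ?_ ?_
    · intro x; simp only [mGen]; ring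
    · intro x; simp only [mGen]; ring
    · linarith

theorem thMax_comm (u v : V) : thMax G u v = thMax G v u := by
  unfold thMax varpi; rw [max_comm, max_comm (G.degree u)]

theorem tri_comm (u v : V) : tri G u v = tri G v u := by
  unfold tri; rw [Finset.inter_comm]

theorem C4_comm (u v : V) : C4 G u v = C4 G v u := by
  unfold C4 Xi; rw [thMax_comm, add_comm]

theorem mem_uniq {u v x : V} : x ∈ uniq G u v ↔ G.Adj u x ∧ x ≠ v ∧ ¬ G.Adj v x := by
  simp [uniq]

/-- Indicator function of a finite set. -/
def ind (S : Finset V) (x : V) : ℝ := if x ∈ S then 1 else 0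

theorem sum_ind (S : Finset V) : ∑ x, ind S x = S.card := by simp [ind]

theorem ind_nonneg (S : Finset V) (x : V) : 0 ≤ ind S x := by unfold ind; split_ifs <;> norm_num

/-- Square-matched mass at `x`. -/
def sq (u v x : V) : ℝ := if x ∈ uniq G u v then (boxT G x u v : ℝ) / (thMax G u v : ℝ) else 0

/-- Square-matched plan. -/
def sqPlan (u v x y : V) : ℝ :=
  if x ∈ uniq G u v ∧ y ∈ uniq G v u ∧ G.Adj x y then 1 / (thMax G u v : ℝ) else 0

theorem sum_sqPlan (u v x : V) : ∑ y, sqPlan G u v x y = sq G u v x := by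
  unfold sqPlan sq
  by_cases h : x ∈ uniq G u v
  · simp only [h, true_and, if_true]
    rw [← Finset.sum_filter, Finset.sum_const, nsmul_eq_mul, mul_one_div]
    congr 2
    unfold boxT
    congr 1
    ext y; simp [and_comm]
  · simp [h]

theorem sqPlan_comm (u v x y : V) : sqPlan G u v x y = sqPlan G v u y x := by
  unfold sqPlan
  rw [thMax_comm]
  congr 1
  rw [G.adj_comm]
  apply propext; tauto

theorem sqPlan_nonneg (u v x y : V) : 0 ≤ sqPlan G u v x y := by
  unfold sqPlan; split_ifs <;> positivity

theorem sq_nonneg' (u v x : V) : 0 ≤ sq G u v x := by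
  unfold sq; split_ifs <;> positivity

theorem TP_sq (i j : V) : TP G (sq G i j) (sq G j i) (∑ x, sq G i j x) := by
  refine ⟨sqPlan G i j, ⟨sqPlan_nonneg G i j, sum_sqPlan G i j, fun y => ?_⟩, ?_⟩
  · simp only [sqPlan_comm G i j]
    exact sum_sqPlan G j i y
  · simp only [← sum_sqPlan]
    refine Finset.sum_le_sum fun x _ => Finset.sum_le_sum fun y _ => ?_
    unfold sqPlan
    split_ifs with h
    · rw [(SimpleGraph.dist_eq_one_iff_adj).2 h.2.2]; simp
    · simp

theorem sum_sq_comm (i j : V) : ∑ x, sq G i j x = ∑ x, sq G j i x := by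
  simp only [← sum_sqPlan]
  rw [Finset.sum_comm]
  simp only [sqPlan_comm G i j]

theorem sq_le (u v x : V) : sq G u v x ≤ 1 / (max (G.degree u) (G.degree v) : ℕ) * ind (uniq G u v) x := by
  unfold sq ind
  split_ifs with h
  · have hb : boxT G x u v ≤ varpi G u v := by
      refine le_trans ?_ (le_max_left _ _)
      have hm := (mem_uniq G).1 h
      exact Finset.le_sup (f := fun k => boxT G k u v) (by simp [hm.1, hm.2.1])
    unfold thMax
    generalize varpi G u v = p at *
    generalize max (G.degree u) (G.degree v) = M at *
    rcases Nat.eq_zero_or_pos p with rfl | hp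
    · simp
    rcases Nat.eq_zero_or_pos M with rfl | hM
    · simp
    have hb' : (boxT G x u v : ℝ) ≤ p := by exact_mod_cast hb
    have hp' : (0 : ℝ) < p := by exact_mod_cast hp
    have hM' : (0 : ℝ) < M := by exact_mod_cast hM
    push_cast
    rw [mul_one, div_le_div_iff₀ (by positivity) hM']
    nlinarith
  · simp

theorem xi_le (u v : V) : ((xiSet G u v).card : ℝ) / (thMax G u v : ℝ) ≤ ∑ x, sq G u v x := by
  have h1 : ∑ x ∈ xiSet G u v, sq G u v x ≤ ∑ x, sq G u v x :=
    Finset.sum_le_sum_of_subset_of_nonneg (Finset.subset_univ _) fun x _ _ => sq_nonneg' G u v x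
  refine le_trans ?_ h1
  have h2 : ((xiSet G u v).card : ℝ) / (thMax G u v : ℝ) =
      ∑ x ∈ xiSet G u v, 1 / (thMax G u v : ℝ) := by
    rw [Finset.sum_const, nsmul_eq_mul, mul_one_div]
  rw [h2]
  refine Finset.sum_le_sum fun x hx => ?_
  obtain ⟨hx1, w, hw, hxw⟩ := Finset.mem_filter.1 hx
  unfold sq
  rw [if_pos hx1]
  have : 1 ≤ boxT G x u v := Finset.card_pos.2 ⟨w, by simp [hxw, hw]⟩
  exact div_le_div_of_nonneg_right (by exact_mod_cast this) (Nat.cast_nonneg _)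

theorem C4_le (i j : V) : C4 G i j / 2 ≤ ∑ x, sq G i j x := by
  have h1 := xi_le G i j
  have h2 := xi_le G j i
  rw [← sum_sq_comm, thMax_comm] at h2
  have h0 : 0 ≤ ∑ x, sq G i j x := Finset.sum_nonneg fun x _ => sq_nonneg' G i j x
  unfold C4
  split_ifs
  · unfold Xi
    push_cast
    rw [add_div]; linarith
  · linarith

theorem C4_nonneg (i j : V) : 0 ≤ C4 G i j := by
  unfold C4; split_ifs <;> positivity

theorem nbr_split (i j x : V) (hij : G.Adj i j) :
    dirac j x + ind (uniq G i j) x + ind (G.neighborFinset i ∩ G.neighborFinset j) x =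
      if G.Adj i x then 1 else 0 := by
  unfold dirac ind
  simp only [mem_uniq, Finset.mem_inter, SimpleGraph.mem_neighborFinset]
  by_cases h1 : x = j
  · subst h1; simp [hij]
  · by_cases h2 : G.Adj i x <;> by_cases h3 : G.Adj j x <;> simp [h1, h2, h3]

theorem pos_mono {a b : ℝ} (h : a ≤ b) : pos a ≤ pos b := max_le_max_right 0 h

theorem nonlazy_aux (hG : G.Connected) (i j : V) (hij : G.Adj i j)
    (hj : 0 < G.degree j) (hle : G.degree j ≤ G.degree i) :
    TP G (unif G i) (unif G j)
      (1 - tri G i j / (G.degree i : ℝ)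
        + pos (1 - 1 / (G.degree j : ℝ) - 1 / (G.degree i : ℝ)
            - tri G i j / (G.degree i : ℝ) - C4 G i j / 2)
        + pos (1 - 1 / (G.degree j : ℝ) - 1 / (G.degree i : ℝ)
            - tri G i j / (G.degree j : ℝ) - C4 G i j / 2)) := by
  have hi : 0 < G.degree i := hj.trans_le hle
  have eM : max (G.degree i) (G.degree j) = G.degree i := max_eq_left hle
  have eM' : max (G.degree j) (G.degree i) = G.degree i := max_eq_right hle
  have hm0 : (0 : ℝ) < G.degree j := by exact_mod_cast hj
  have hM0 : (0 : ℝ) < G.degree i := by exact_mod_cast hi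
  have hmM : (G.degree j : ℝ) ≤ G.degree i := by exact_mod_cast hle
  have hinv : 1 / (G.degree i : ℝ) ≤ 1 / (G.degree j : ℝ) := one_div_le_one_div_of_le hm0 hmM
  have ui : ∀ x, unif G i x = 1 / (G.degree i : ℝ) * (dirac j x + ind (uniq G i j) x
      + ind (G.neighborFinset i ∩ G.neighborFinset j) x) := by
    intro x; rw [nbr_split G i j x hij]; unfold unif; split_ifs <;> simp
  have uj : ∀ x, unif G j x = 1 / (G.degree j : ℝ) * (dirac i x + ind (uniq G j i) x
      + ind (G.neighborFinset i ∩ G.neighborFinset j) x) := by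
    intro x
    rw [Finset.inter_comm, nbr_split G j i x hij.symm]; unfold unif; split_ifs <;> simp
  have si := sum_unif G i hi
  have sj := sum_unif G j hj
  simp only [ui, ← Finset.mul_sum, Finset.sum_add_distrib, sum_dirac, sum_ind] at si
  simp only [uj, ← Finset.mul_sum, Finset.sum_add_distrib, sum_dirac, sum_ind] at sj
  have hs := C4_le G i j
  have q1 := TP_sq G i j
  have hsc := sum_sq_comm G i j
  have li := sq_le G i j
  have lj := sq_le G j i
  rw [eM] at li
  rw [eM'] at lj
  change 1 / (G.degree i : ℝ) * (1 + ((uniq G i j).card : ℝ) + (tri G i j : ℝ)) = 1 at si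
  change 1 / (G.degree j : ℝ) * (1 + ((uniq G j i).card : ℝ) + (tri G i j : ℝ)) = 1 at sj
  have hT : ((G.neighborFinset i ∩ G.neighborFinset j).card : ℝ) = (tri G i j : ℝ) := rfl
  rw [← mul_one_div (tri G i j : ℝ) (G.degree i : ℝ), ← mul_one_div (tri G i j : ℝ) (G.degree j : ℝ)]
  have hP0 : 0 ≤ 1 / (G.degree i : ℝ) := by positivity
  generalize 1 / (G.degree i : ℝ) = P at *
  generalize 1 / (G.degree j : ℝ) = Q at *
  generalize hsv : ∑ x, sq G i j x = s at *
  have q0 := TP.diag G (fun x => P * ind (G.neighborFinset i ∩ G.neighborFinset j) x)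
    (fun x => mul_nonneg hP0 (ind_nonneg _ _))
  have q2 := TP.block' G (fun x => P * dirac j x) (fun x => P * ind (uniq G i j) x - sq G i j x)
    (fun x => Q * dirac i x)
    (fun x => (Q - P) * ind (G.neighborFinset i ∩ G.neighborFinset j) x)
    (fun x => Q * ind (uniq G j i) x - sq G j i x)
    (fun x => mul_nonneg hP0 (dirac_nonneg _ _))
    (fun x => sub_nonneg.2 (li x))
    (fun x => mul_nonneg (hP0.trans hinv) (dirac_nonneg _ _))
    (fun x => mul_nonneg (sub_nonneg.2 hinv) (ind_nonneg _ _))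
    (fun x => sub_nonneg.2 ((lj x).trans (mul_le_mul_of_nonneg_right hinv (ind_nonneg _ _))))
    P (P * (uniq G i j).card - s) Q ((Q - P) * tri G i j) (Q * (uniq G j i).card - s)
    (by rw [← Finset.mul_sum, sum_dirac, mul_one])
    (by rw [Finset.sum_sub_distrib, ← Finset.mul_sum, sum_ind, hsv])
    (by rw [← Finset.mul_sum, sum_dirac, mul_one])
    (by rw [← Finset.mul_sum, sum_ind, hT])
    (by rw [Finset.sum_sub_distrib, ← Finset.mul_sum, sum_ind, ← hsc])
    (by linarith)
  have adir : ∀ (u x : V) (c : ℝ), c * dirac u x ≠ 0 → x = u := by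
    intro u x c hh; by_contra h1; simp [dirac, h1] at hh
  have asq : ∀ (u v x : V) (c : ℝ), c * ind (uniq G u v) x - sq G u v x ≠ 0 → G.Adj u x := by
    intro u v x c hh; by_contra h1; apply hh
    have : x ∉ uniq G u v := fun h2 => h1 ((mem_uniq G).1 h2).1
    simp [ind, sq, this]
  have acm : ∀ (x : V) (c : ℝ), c * ind (G.neighborFinset i ∩ G.neighborFinset j) x ≠ 0 →
      G.Adj i x ∧ G.Adj j x := by
    intro x c hh; by_contra h1; apply hh
    have : x ∉ G.neighborFinset i ∩ G.neighborFinset j := fun h2 => h1 (by simpa using h2)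
    simp only [ind, if_neg this, mul_zero]
  have d1 : ∀ {x y : V}, G.Adj x y → G.dist x y ≤ 1 := fun h =>
    ((SimpleGraph.dist_eq_one_iff_adj).2 h).le
  specialize q2 (fun x y hx hy => by
      rw [adir _ _ _ hx, adir _ _ _ hy]; exact d1 hij.symm)
    (fun x y hx hy => by
      rw [adir _ _ _ hx]; exact d1 (acm _ _ hy).2)
    (fun x y hx hy => by
      rw [adir _ _ _ hx]; exact d1 (asq _ _ _ _ hy))
    (fun x y hx hy => by
      rw [adir _ _ _ hy]; exact d1 (asq _ _ _ _ hx).symm)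
    (fun x y hx hy => dist_le_two G hG (asq _ _ _ _ hx) (acm _ _ hy).1)
    (fun x y hx hy => by
      have h1 := dist_le_two G hG (asq _ _ _ _ hx) hij
      have h2 := d1 (asq _ _ _ _ hy)
      have h3 := hG.dist_triangle (u := x) (v := j) (w := y)
      omega)
  refine ((q0.add G q1).add G q2).congr G ?_ ?_ ?_
  · intro x; rw [ui]; ring
  · intro x; rw [uj]; ring
  · have k1 := pos_mono (a := P * (uniq G i j).card - s - Q)
      (b := 1 - Q - P - tri G i j * P - C4 G i j / 2) (by linarith)
    have k2 := pos_mono (a := Q * (uniq G j i).card - s - P)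
      (b := 1 - Q - P - tri G i j * Q - C4 G i j / 2) (by linarith)
    linarith

theorem nonlazy (hG : G.Connected) (i j : V) (hij : G.Adj i j) (hmin : 2 ≤ rhoMin G i j) :
    TP G (unif G i) (unif G j)
      (1 - tri G i j / (rhoMax G i j : ℝ)
        + pos (frakK G i j - tri G i j / (rhoMax G i j : ℝ) - C4 G i j / 2)
        + pos (frakK G i j - tri G i j / (rhoMin G i j : ℝ) - C4 G i j / 2)) := by
  unfold frakK rhoMin rhoMax at *
  rcases le_total (G.degree j) (G.degree i) with h | h
  · rw [max_eq_left h, min_eq_right h] at *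
    exact nonlazy_aux G hG i j hij (by omega) h
  · rw [max_eq_right h, min_eq_left h] at *
    have := nonlazy_aux G hG j i hij.symm (by omega) h
    rw [tri_comm, C4_comm] at this
    exact this.symm G

theorem tri_le (i j : V) (hij : G.Adj i j) : tri G i j + 1 ≤ rhoMin G i j := by
  have key : ∀ u v : V, G.Adj u v → tri G u v + 1 ≤ G.degree u := by
    intro u v huv
    rw [← SimpleGraph.card_neighborFinset_eq_degree]
    apply Finset.card_lt_card
    refine Finset.ssubset_iff_subset_ne.2 ⟨Finset.inter_subset_left, fun h => ?_⟩
    have : v ∈ G.neighborFinset u := by simpa using huv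
    rw [← h] at this
    simp at this
  have h1 := key i j hij
  have h2 := key j i hij.symm
  rw [tri_comm] at h2
  exact le_min h1 h2

theorem phi0_le (i j : V) (hij : G.Adj i j) (hmin : 2 ≤ rhoMin G i j) (z : ℝ)
    (hBF : cBF G i j ≥ z) :
    phi0 G i j z ≤ tri G i j / (rhoMax G i j : ℝ)
        - pos (frakK G i j - tri G i j / (rhoMax G i j : ℝ) - C4 G i j / 2)
        - pos (frakK G i j - tri G i j / (rhoMin G i j : ℝ) - C4 G i j / 2) := by
  have hT : (tri G i j : ℝ) ≤ (rhoMin G i j : ℝ) - 1 := by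
    have := tri_le G i j hij
    have h : ((tri G i j + 1 : ℕ) : ℝ) ≤ (rhoMin G i j : ℝ) := by exact_mod_cast this
    push_cast at h; linarith
  have hm : (0 : ℝ) < rhoMin G i j := by
    have : 0 < rhoMin G i j := by omega
    exact_mod_cast this
  have hM : (0 : ℝ) < rhoMax G i j := by
    have : rhoMin G i j ≤ rhoMax G i j := min_le_max
    have : 0 < rhoMax G i j := by omega
    exact_mod_cast this
  have ht : 0 < frakT G i j := by unfold frakT; positivity
  have hc := C4_nonneg G i j
  unfold cBF at hBF
  rw [if_neg (by omega)] at hBF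
  have hZ : Zzeta G i j z ≤ tri G i j := by
    unfold Zzeta
    refine max_le (Nat.cast_nonneg _) ?_
    rw [div_le_iff₀ ht]; linarith
  have hS : Sfloor G i j z ≤ C4 G i j / 2 := by
    unfold Sfloor
    refine max_le le_rfl ?_
    have : pos (z - frakS G i j - frakT G i j * ((rhoMin G i j : ℝ) - 1)) ≤ C4 G i j := by
      refine max_le ?_ hc
      have := mul_le_mul_of_nonneg_left hT ht.le
      linarith
    linarith
  have h1 := div_le_div_of_nonneg_right hZ hM.le
  have h2 := div_le_div_of_nonneg_right hZ hm.le
  unfold phi0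
  have k1 := pos_mono (a := frakK G i j - tri G i j / (rhoMax G i j : ℝ) - C4 G i j / 2)
    (b := frakK G i j - Zzeta G i j z / (rhoMax G i j : ℝ) - Sfloor G i j z) (by linarith)
  have k2 := pos_mono (a := frakK G i j - tri G i j / (rhoMin G i j : ℝ) - C4 G i j / 2)
    (b := frakK G i j - Zzeta G i j z / (rhoMin G i j : ℝ) - Sfloor G i j z) (by linarith)
  linarith

theorem lazy_full (hG : G.Connected) (i j : V) (hij : G.Adj i j) (hmin : 2 ≤ rhoMin G i j) (c : ℝ)
    (h : TP G (unif G i) (unif G j) c) :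
    W1 G (mLazy G i) (mLazy G j) ≤ alphaStar G i j + (1 - alphaStar G i j) * c + DeltaL G i j := by
  have hi : 0 < G.degree i := by unfold rhoMin at hmin; omega
  have hj : 0 < G.degree j := by unfold rhoMin at hmin; omega
  have hn : ∀ u, 0 ≤ alphaL G u := fun u => by unfold alphaL; positivity
  have h1 : ∀ u, alphaL G u ≤ 1 := fun u => by
    unfold alphaL
    exact inv_le_one_of_one_le₀ (by linarith [Nat.cast_nonneg (α := ℝ) (G.degree u)])
  unfold alphaStar DeltaL mLazy
  rcases le_total (alphaL G i) (alphaL G j) with hh | hh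
  · rw [min_eq_left hh, max_eq_right hh]
    have := lazy_aux G hG i j hij _ _ c (hn i) hh (h1 j) hi h
    split_ifs
    · exact this.1.w1 G
    · exact this.2.w1 G
  · rw [min_eq_right hh, max_eq_left hh]
    have := lazy_aux G hG j i hij.symm _ _ c (hn j) hh (h1 i) hj (h.symm G)
    split_ifs
    · exact (this.1.symm G).w1 G
    · exact (this.2.symm G).w1 G

/-- BF-to-OR lower transfer modulus. -/
theorem stmt13 (hG : G.Connected) (i j : V) (hij : G.Adj i j)
    (hmin : 2 ≤ rhoMin G i j) (z : ℝ) (hBF : cBF G i j ≥ z) :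
    cOR G i j ≥ phiBFOR G i j z := by
  have h1 := lazy_full G hG i j hij hmin _ (nonlazy G hG i j hij hmin)
  have h2 := phi0_le G i j hij hmin z hBF
  have h3 : 0 ≤ 1 - alphaStar G i j := by
    have h1 : ∀ u, alphaL G u ≤ 1 := fun u => by
      unfold alphaL
      exact inv_le_one_of_one_le₀ (by linarith [Nat.cast_nonneg (α := ℝ) (G.degree u)])
    unfold alphaStar
    split_ifs
    · linarith [min_le_left (alphaL G i) (alphaL G j), h1 i]
    · linarith [max_le (h1 i) (h1 j)]
  have h4 := mul_le_mul_of_nonneg_left h2 h3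
  unfold cOR phiBFOR
  linarith

end

end Curv
end
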